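/- Let d ≥ 2, σ > 0 and ω > 0, and set I_ω = inf{‖∇u‖₂² + ω‖u‖₂² : u : ℤ^d → [0,∞), Σ_x u(x)² < ∞, ‖u‖_{2σ+2} = 1}. Then the infimum is attained by a Schwarz symmetric function, i.e. there exists u : ℤ^d → [0,∞) with Σ_x u(x)² < ∞, ‖u‖_{2σ+2} = 1, u = R_{ℤ^d} u, and ‖∇u‖₂² + ω‖u‖₂² = I_ω. -/

import Mathlib

open Filter Topology

noncomputable section

abbrev ZLat (d : ℕ) := Fin d → ℤ

def stdVec (d : ℕ) (i : Fin d) : Fin d → ℝ := fun j => if j = i then 1 else 0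

/-- The set of directions E⃗ ⊆ ℝ^d. -/
def Evec (d : ℕ) : Set (Fin d → ℝ) :=
  {e | (∃ i, e = stdVec d i) ∨
    (∃ i j : Fin d, i < j ∧ e = fun k => (stdVec d i k + stdVec d j k) / 2) ∨
    (∃ i j : Fin d, i < j ∧ e = fun k => (stdVec d i k - stdVec d j k) / 2)}

/-- A fixed enumeration of E⃗ (for d = 2 it is e₁, e₂, (e₁+e₂)/2, (e₁-e₂)/2). -/
def EvecList (d : ℕ) : List (Fin d → ℝ) :=
  ((List.finRange d).map (stdVec d)) ++
  ((List.finRange d).flatMap fun i => (List.finRange d).filterMap fun j =>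
    if i < j then some (fun k => (stdVec d i k + stdVec d j k) / 2) else none) ++
  ((List.finRange d).flatMap fun i => (List.finRange d).filterMap fun j =>
    if i < j then some (fun k => (stdVec d i k - stdVec d j k) / 2) else none)

/-- The n-th largest value of `u`, counted with multiplicity (1-indexed). -/
def nthLargest {α : Type*} (u : α → NNReal) (n : ℕ) : NNReal :=
  sSup {t | ∃ Ω : Finset α, Ω.card = n ∧ ∀ x ∈ Ω, t ≤ u x}

/-- The 1-indexed position of the point with doubled coordinate `m` in the
spiral order 0, 1, −1, 2, −2, … (for even m) resp. 1/2, −1/2, 3/2, −3/2, … (for odd m). -/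
def posIdx (m : ℤ) : ℕ := (if 0 < m then m else 1 - m).toNat

/-- `x` and `y` lie on a common line with direction `e`. -/
def sameLine {d : ℕ} (e : Fin d → ℝ) (x y : ZLat d) : Prop :=
  ∃ c : ℝ, (fun i => (x i : ℝ) - (y i : ℝ)) = c • e

/-- Twice the inner product ⟨e, x⟩, as an integer. -/
def pairing {d : ℕ} (e : Fin d → ℝ) (x : ZLat d) : ℤ :=
  ⌊2 * ∑ i, e i * (x i : ℝ)⌋

/-- One-step rearrangement `R_e`. -/
def stepR {d : ℕ} (e : Fin d → ℝ) (u : ZLat d → NNReal) : ZLat d → NNReal :=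
  fun x => nthLargest (fun y : {y : ZLat d // sameLine e x y} => u y.1) (posIdx (pairing e x))

/-- `R^k u` : k successive one-step rearrangements cycling through the fixed enumeration. -/
def iterR (d : ℕ) (u : ZLat d → NNReal) : ℕ → ZLat d → NNReal
  | 0 => u
  | k + 1 => stepR ((EvecList d).getD (k % (EvecList d).length) 0) (iterR d u k)

/-- The Schwarz rearrangement on ℤ^d : pointwise limit of `R^k u`. -/
def RZd (d : ℕ) (u : ZLat d → NNReal) : ZLat d → NNReal :=
  fun x => limUnder atTop fun k => iterR d u k x

def Admissible {α : Type*} (u : α → NNReal) : Prop :=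
  ∀ t : NNReal, 0 < t → {x | t < u x}.Finite

def Equimeasurable {α : Type*} (u v : α → NNReal) : Prop :=
  ∀ t : NNReal, 0 < t → Nonempty ({x | t < u x} ≃ {x | t < v x})

/-- Graph distance (ℓ¹ distance) on the lattice ℤ^d. -/
def latDist {d : ℕ} (x y : ZLat d) : ℕ := ∑ i, (x i - y i).natAbs

/-- The i-th standard basis vector of ℤ^d. -/
def latE {d : ℕ} (i : Fin d) : ZLat d := fun j => if j = i then 1 else 0

/-- ‖∇u‖_p^p : the p-Sobolev energy, summing over each edge {x, x+e_i} once. -/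
def gradEnergy (d : ℕ) (p : ℝ) (u : ZLat d → NNReal) : ENNReal :=
  ∑' (x : ZLat d) (i : Fin d), ENNReal.ofReal (|(u (x + latE i) : ℝ) - (u x : ℝ)| ^ p)

/-- ‖∇u‖_p. -/
def gradNorm (d : ℕ) (p : ℝ) (u : ZLat d → NNReal) : ENNReal :=
  gradEnergy d p u ^ (1 / p)

/-- Graph automorphism of the lattice graph ℤ^d. -/
def IsLatAuto {d : ℕ} (σ : ZLat d ≃ ZLat d) : Prop :=
  ∀ x y : ZLat d, latDist (σ x) (σ y) = 1 ↔ latDist x y = 1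

def Supermodular (G : NNReal → NNReal → NNReal) : Prop :=
  ∀ s t s₀ t₀ : NNReal, G (s + s₀) t + G s (t + t₀) ≤ G (s + s₀) (t + t₀) + G s t

def StrictlySupermodular (G : NNReal → NNReal → NNReal) : Prop :=
  ∀ s t s₀ t₀ : NNReal, 0 < s₀ → 0 < t₀ →
    G (s + s₀) t + G s (t + t₀) < G (s + s₀) (t + t₀) + G s t

/-- The values of `u` are strictly decreasing: a₁ > a₂ > a₃ > ⋯ . -/
def StrictRan {α : Type*} (u : α → NNReal) : Prop :=
  ∀ n : ℕ, 0 < n → nthLargest u (n + 1) < nthLargest u n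

/-! Each hyperplane on which a positive coroot of `B_d` takes the value `0` or `1` is the mirror
of a reflection of `ℤ^d`. Polarizing a function towards the side of the mirror that contains the
fundamental alcove does not increase `‖∇u‖₂²`: an edge that crosses the mirror joins a point to
its mirror image. It strictly lowers the moment of the distances to a generic point of the alcove,
unless it does nothing. Hence, among the finitely many rearrangements in a ball of a finitely
supported function, there is one of no larger energy that all these polarizations fix.

Such a function decreases in spiral order along each line in a direction of `E⃗`, since reflecting
alternately at the values `0` and `1` runs through the line in this order. So every `R_e` fixes
it, and `|x_i| u(x)² ≤ ‖u‖₂²`. The decay makes `‖·‖_r`, `r > 2`, continuous for pointwise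
convergence on sets of such functions bounded in `ℓ²`, and the direct method gives a minimizer
among the symmetric functions. Truncation and scaling reduce a general competitor to a finitely
supported one. -/

open scoped NNReal ENNReal

section Enumeration

variable {α : Type*} {pos : α → ℕ} {u : α → ℝ≥0}

theorem exists_finset_card_eq_forall_le (hpos : Set.BijOn pos Set.univ (Set.Ici 1))
    (hu : ∀ ⦃y z⦄, pos y ≤ pos z → u z ≤ u y) (x : α) :
    ∃ Ω : Finset α, Ω.card = pos x ∧ ∀ y ∈ Ω, u x ≤ u y := by
  classical
  refine ⟨(Finset.Icc 1 (pos x)).preimage pos (hpos.injOn.mono (Set.subset_univ _)), ?_,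
    fun y hy => hu (Finset.mem_Icc.1 (Finset.mem_preimage.1 hy)).2⟩
  have hrange : ∀ n ∈ Finset.Icc 1 (pos x), n ∈ Set.range pos := fun n hn => by
    simpa using hpos.surjOn (Finset.mem_Icc.1 hn).1
  rw [Finset.card_preimage, Finset.filter_true_of_mem hrange, Nat.card_Icc, Nat.add_sub_cancel]

theorem nthLargest_eq_of_bijOn (hpos : Set.BijOn pos Set.univ (Set.Ici 1))
    (hu : ∀ ⦃y z⦄, pos y ≤ pos z → u z ≤ u y) (x : α) : nthLargest u (pos x) = u x := by
  classical
  refine IsGreatest.csSup_eq ⟨exists_finset_card_eq_forall_le hpos hu x, ?_⟩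
  rintro t ⟨Ω, hcard, ht⟩
  obtain ⟨y, hy, hxy⟩ : ∃ y ∈ Ω, pos x ≤ pos y := by
    by_contra! hlt
    have hsub : Ω.image pos ⊆ Finset.Ico 1 (pos x) :=
      Finset.image_subset_iff.2 fun y hy =>
        Finset.mem_Ico.2 ⟨hpos.mapsTo (Set.mem_univ y), hlt y hy⟩
    have hle := Finset.card_le_card hsub
    rw [Finset.card_image_of_injective _ (Set.injOn_univ.1 hpos.injOn), hcard, Nat.card_Ico] at hle
    have : 1 ≤ pos x := hpos.mapsTo (Set.mem_univ x)
    lia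
  exact (ht y hy).trans (hu hxy)

theorem natCast_pos_mul_le_tsum (hpos : Set.BijOn pos Set.univ (Set.Ici 1))
    (hu : ∀ ⦃y z⦄, pos y ≤ pos z → u z ≤ u y) {g : ℝ≥0 → ℝ≥0∞} (hg : Monotone g) (x : α) :
    pos x * g (u x) ≤ ∑' y, g (u y) := by
  obtain ⟨Ω, hcard, hΩ⟩ := exists_finset_card_eq_forall_le hpos hu x
  calc pos x * g (u x) = Ω.card • g (u x) := by rw [hcard, nsmul_eq_mul]
    _ ≤ ∑ y ∈ Ω, g (u y) := Ω.card_nsmul_le_sum _ _ fun y hy => hg (hΩ y hy)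
    _ ≤ ∑' y, g (u y) := ENNReal.sum_le_tsum Ω

end Enumeration

section Involution

variable {α : Type*} {τ : α → α}

theorem two_mul_tsum_eq_tsum_add_comp (hτ : Function.Involutive τ) (f : α → ℝ≥0∞) :
    2 * ∑' x, f x = ∑' x, (f x + f (τ x)) := by
  have hcomp : ∑' x, f (τ x) = ∑' x, f x := hτ.toPerm.tsum_eq f
  rw [ENNReal.tsum_add, hcomp, two_mul]

theorem tsum_le_tsum_of_involutive (hτ : Function.Involutive τ) {f g : α → ℝ≥0∞}
    (h : ∀ x, f x + f (τ x) ≤ g x + g (τ x)) : ∑' x, f x ≤ ∑' x, g x := by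
  rw [← ENNReal.mul_le_mul_iff_right two_ne_zero ENNReal.ofNat_ne_top,
    two_mul_tsum_eq_tsum_add_comp hτ, two_mul_tsum_eq_tsum_add_comp hτ]
  exact ENNReal.tsum_le_tsum h

theorem tsum_lt_tsum_of_involutive (hτ : Function.Involutive τ) {f g : α → ℝ≥0∞}
    (hg : ∑' x, g x ≠ ⊤) (h : ∀ x, f x + f (τ x) ≤ g x + g (τ x)) {x : α}
    (hx : f x + f (τ x) < g x + g (τ x)) : ∑' x, f x < ∑' x, g x := by
  have hf : ∑' x, f x ≠ ⊤ := ne_top_of_le_ne_top hg (tsum_le_tsum_of_involutive hτ h)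
  rw [← ENNReal.mul_lt_mul_iff_right two_ne_zero ENNReal.ofNat_ne_top,
    two_mul_tsum_eq_tsum_add_comp hτ, two_mul_tsum_eq_tsum_add_comp hτ]
  refine ENNReal.tsum_lt_tsum ?_ h hx
  rw [← two_mul_tsum_eq_tsum_add_comp hτ]
  exact ENNReal.mul_ne_top ENNReal.ofNat_ne_top hf

end Involution

section Polarization

variable {α R : Type*}

/-- An involution compatible with a ranking of the points: the abstract form of a reflection that
exchanges a low-ranked half-space with a high-ranked one and fixes the wall between them. -/
structure IsFolding (rank : α → ℕ) (τ : α → α) : Prop where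
  involutive : Function.Involutive τ
  eq_self_of_rank_eq : ∀ x, rank (τ x) = rank x → τ x = x

/-- A folding by a graph endomorphism, such that the only edges crossing the wall are those that
join a point to its mirror image. These are the foldings whose polarization does not increase edge
energies. -/
structure IsPolarizer (G : SimpleGraph α) (rank : α → ℕ) (τ : α → α) : Prop
    extends IsFolding rank τ where
  map_adj : ∀ ⦃x y⦄, G.Adj x y → G.Adj (τ x) (τ y)
  eq_of_adj : ∀ ⦃x y⦄, G.Adj x y → rank x < rank (τ x) → rank (τ y) < rank y → y = τ x

/-- The polarization (two-point rearrangement) of `u`: each pair `{x, τ x}` receives the larger of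
its two values at its lower-ranked point. -/
def polarize [LinearOrder R] (rank : α → ℕ) (τ : α → α) (u : α → R) (x : α) : R :=
  if rank x ≤ rank (τ x) then max (u x) (u (τ x)) else min (u x) (u (τ x))

/-- Being a fixed point of polarization: `u` is at least as large on the lower-ranked side of `τ` as
at the mirror points. -/
def IsPolarizedBy [LE R] (rank : α → ℕ) (τ : α → α) (u : α → R) : Prop :=
  ∀ x, rank x < rank (τ x) → u (τ x) ≤ u x

/-- `u` is a rearrangement of `w`: the two functions take each value equally often. This is encoded
by the equality of all sums of functions of the values. -/
def IsRearrangement (u w : α → R) : Prop :=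
  ∀ g : R → ℝ≥0∞, ∑' x, g (u x) = ∑' x, g (w x)

theorem IsRearrangement.range_subset {u w : α → R} (h : IsRearrangement u w) :
    Set.range u ⊆ Set.range w := by
  classical
  rintro _ ⟨x, rfl⟩
  by_contra hx
  have hw : ∑' y, (if w y = u x then 1 else 0 : ℝ≥0∞) = 0 :=
    ENNReal.tsum_eq_zero.2 fun y => if_neg fun hy => hx ⟨y, hy⟩
  rw [← h fun t => if t = u x then 1 else 0, ENNReal.tsum_eq_zero] at hw
  simpa using hw x

theorem finite_setOf_support_subset_isRearrangement [Zero R] {B : Set α} (hB : B.Finite) {w : α → R}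
    (hw : w.support.Finite) : {u : α → R | u.support ⊆ B ∧ IsRearrangement u w}.Finite := by
  have : Finite B := hB
  have hrange : (Set.range w).Finite :=
    ((hw.image w).insert 0).subset (Function.range_subset_insert_image_support w)
  refine Set.Finite.of_injOn (f := fun u : α → R => fun x : B => u x) ?_ ?_
    (Set.Finite.pi' fun _ : B => hrange)
  · exact fun u hu x => hu.2.range_subset ⟨x, rfl⟩
  · intro u hu v hv huv
    ext x
    by_cases hx : x ∈ B
    · exact congrFun huv ⟨x, hx⟩
    · rw [Function.notMem_support.1 fun h => hx (hu.1 h),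
        Function.notMem_support.1 fun h => hx (hv.1 h)]

variable {rank : α → ℕ} {τ : α → α}

section LinearOrder

variable [LinearOrder R] {u : α → R} {x : α}

theorem polarize_of_rank_le (hx : rank x ≤ rank (τ x)) :
    polarize rank τ u x = max (u x) (u (τ x)) :=
  if_pos hx

theorem IsFolding.polarize_apply_of_rank_le (h : IsFolding rank τ) (hx : rank x ≤ rank (τ x)) :
    polarize rank τ u (τ x) = min (u x) (u (τ x)) := by
  rcases hx.lt_or_eq with hlt | heq
  · rw [polarize, h.involutive x, if_neg hlt.not_ge, min_comm]
  · rw [polarize, h.involutive x, h.eq_self_of_rank_eq x heq.symm, max_self, min_self, ite_self]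

theorem IsFolding.mk_polarize (h : IsFolding rank τ) (u : α → R) (x : α) :
    s(polarize rank τ u x, polarize rank τ u (τ x)) = s(u x, u (τ x)) := by
  have hle : ∀ x, rank x ≤ rank (τ x) →
      s(polarize rank τ u x, polarize rank τ u (τ x)) = s(u x, u (τ x)) := by
    intro x hx
    rw [polarize_of_rank_le hx, h.polarize_apply_of_rank_le hx]
    rcases le_total (u x) (u (τ x)) with hu | hu
    · rw [max_eq_right hu, min_eq_left hu, Sym2.eq_swap]
    · rw [max_eq_left hu, min_eq_right hu]
  rcases le_total (rank x) (rank (τ x)) with hx | hx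
  · exact hle x hx
  · rw [Sym2.eq_swap, Sym2.eq_swap (a := u x)]
    simpa only [h.involutive x] using hle (τ x) (by rwa [h.involutive x])

theorem IsFolding.isRearrangement_polarize (h : IsFolding rank τ) (u : α → R) :
    IsRearrangement (polarize rank τ u) u := by
  intro g
  have hpair : ∀ x,
      g (polarize rank τ u x) + g (polarize rank τ u (τ x)) = g (u x) + g (u (τ x)) := by
    intro x
    rcases Sym2.eq_iff.1 (h.mk_polarize u x) with ⟨hx, hτx⟩ | ⟨hx, hτx⟩
    · rw [hx, hτx]
    · rw [hx, hτx, add_comm]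
  exact le_antisymm (tsum_le_tsum_of_involutive h.involutive fun x => (hpair x).le)
    (tsum_le_tsum_of_involutive h.involutive fun x => (hpair x).ge)

end LinearOrder

theorem support_polarize_subset {u : α → ℝ≥0} {n : ℕ}
    (hu : u.support ⊆ {x | rank x ≤ n}) :
    (polarize rank τ u).support ⊆ {x | rank x ≤ n} := by
  intro x hx
  by_contra hn
  have hux : u x = 0 := Function.notMem_support.1 fun hx => hn (hu hx)
  refine hx ?_
  rcases le_or_gt (rank x) (rank (τ x)) with hle | hlt
  · have huτ : u (τ x) = 0 := Function.notMem_support.1 fun hx => hn (hle.trans (hu hx))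
    rw [polarize_of_rank_le hle, hux, huτ, max_self]
  · rw [polarize, if_neg hlt.not_ge, hux, zero_min]

/-- The first moment of the ranks with respect to `u`, a Lyapunov functional for polarization. -/
def rankMoment (rank : α → ℕ) (u : α → ℝ≥0) : ℝ≥0∞ :=
  ∑' x, ((rank x * u x : ℝ≥0) : ℝ≥0∞)

theorem rankMoment_ne_top {u : α → ℝ≥0} (hu : u.support.Finite) : rankMoment rank u ≠ ⊤ := by
  rw [rankMoment, tsum_eq_sum (s := hu.toFinset) fun x hx => by
    simp [Function.notMem_support.1 fun h => hx (hu.mem_toFinset.2 h)]]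
  exact ENNReal.sum_ne_top.2 fun x _ => ENNReal.coe_ne_top

theorem IsFolding.rankMoment_polarize_lt (h : IsFolding rank τ) {u : α → ℝ≥0}
    (hu : rankMoment rank u ≠ ⊤) (hpol : ¬IsPolarizedBy rank τ u) :
    rankMoment rank (polarize rank τ u) < rankMoment rank u := by
  have hle : ∀ x, rank x ≤ rank (τ x) →
      (rank x * polarize rank τ u x + rank (τ x) * polarize rank τ u (τ x) : ℝ≥0) ≤
        rank x * u x + rank (τ x) * u (τ x) := by
    intro x hx
    rw [polarize_of_rank_le hx, h.polarize_apply_of_rank_le hx]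
    rcases le_total (u x) (u (τ x)) with hux | hux
    · rw [max_eq_right hux, min_eq_left hux]
      exact mul_add_mul_le_mul_add_mul (Nat.cast_le.2 hx) hux
    · rw [max_eq_left hux, min_eq_right hux]
  simp only [IsPolarizedBy, not_forall, not_le] at hpol
  obtain ⟨x, hx, hux⟩ := hpol
  refine tsum_lt_tsum_of_involutive h.involutive hu (fun y => ?_) (x := x) ?_
  · norm_cast
    rcases le_total (rank y) (rank (τ y)) with hy | hy
    · exact hle y hy
    · simpa only [h.involutive y, add_comm] using hle (τ y) (by rwa [h.involutive y])
  · norm_cast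
    rw [polarize_of_rank_le hx.le, h.polarize_apply_of_rank_le hx.le, max_eq_right hux.le,
      min_eq_left hux.le]
    exact mul_add_mul_lt_mul_add_mul (Nat.cast_lt.2 hx) hux

/-- Among the finitely many rearrangements in the same rank sublevel with no larger `J`, the one of
least rank moment is polarized: polarizing it again would lower the moment. -/
theorem exists_isRearrangement_forall_isPolarizedBy {γ : Type*} [Preorder γ]
    (hrank : ∀ n, {x | rank x ≤ n}.Finite) {T : Set (α → α)} (hT : ∀ τ ∈ T, IsFolding rank τ)
    {J : (α → ℝ≥0) → γ} (hJ : ∀ τ ∈ T, ∀ u, J (polarize rank τ u) ≤ J u) {w : α → ℝ≥0}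
    (hw : w.support.Finite) :
    ∃ u, IsRearrangement u w ∧ J u ≤ J w ∧ ∀ τ ∈ T, IsPolarizedBy rank τ u := by
  obtain ⟨n, hn⟩ : ∃ n, w.support ⊆ {x | rank x ≤ n} := by
    obtain ⟨n, hn⟩ := (hw.image rank).bddAbove
    exact ⟨n, fun x hx => hn ⟨x, hx, rfl⟩⟩
  let K : Set (α → ℝ≥0) :=
    {u | (u.support ⊆ {x | rank x ≤ n} ∧ IsRearrangement u w) ∧ J u ≤ J w}
  have hK : K.Finite :=
    (finite_setOf_support_subset_isRearrangement (hrank n) hw).subset fun u hu => hu.1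
  obtain ⟨u, ⟨⟨hsupp, huw⟩, huJ⟩, hmin⟩ :=
    Set.exists_min_image K (rankMoment rank) hK ⟨w, ⟨hn, fun _ => rfl⟩, le_rfl⟩
  refine ⟨u, huw, huJ, fun τ hτ => ?_⟩
  by_contra hpol
  have hlt := (hT τ hτ).rankMoment_polarize_lt (rankMoment_ne_top ((hrank n).subset hsupp)) hpol
  refine hlt.not_ge (hmin _ ⟨⟨support_polarize_subset hsupp, fun g => ?_⟩,
    (hJ τ hτ u).trans huJ⟩)
  rw [(hT τ hτ).isRearrangement_polarize u g, huw g]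

end Polarization

section EdgeEnergy

variable {α R : Type*} {G : SimpleGraph α} {cost : Sym2 R → ℝ≥0∞}

/-- The energy of `u` on a graph in which an edge with end values `a`, `b` costs `cost s(a, b)`;
Dirichlet forms are the case of a squared difference. -/
def edgeEnergy (G : SimpleGraph α) (cost : Sym2 R → ℝ≥0∞) (u : α → R) : ℝ≥0∞ :=
  ∑' e : G.edgeSet, cost (e.1.map u)

section Polarize

variable [LinearOrder R] {rank : α → ℕ} {τ : α → α} {x y : α}

theorem IsFolding.cost_polarize_add_le (h : IsFolding rank τ)
    (hcost : ∀ a a' b b', cost s(max a a', max b b') + cost s(min a a', min b b') ≤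
      cost s(a, b) + cost s(a', b'))
    (u : α → R) (hx : rank x ≤ rank (τ x)) (hy : rank y ≤ rank (τ y)) :
    cost s(polarize rank τ u x, polarize rank τ u y) +
        cost s(polarize rank τ u (τ x), polarize rank τ u (τ y)) ≤
      cost s(u x, u y) + cost s(u (τ x), u (τ y)) := by
  rw [polarize_of_rank_le hx, polarize_of_rank_le hy, h.polarize_apply_of_rank_le hx,
    h.polarize_apply_of_rank_le hy]
  exact hcost _ _ _ _

theorem IsPolarizer.cost_polarize_add_le (h : IsPolarizer G rank τ)
    (hcost : ∀ a a' b b', cost s(max a a', max b b') + cost s(min a a', min b b') ≤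
      cost s(a, b) + cost s(a', b'))
    (u : α → R) (hxy : G.Adj x y) :
    cost s(polarize rank τ u x, polarize rank τ u y) +
        cost s(polarize rank τ u (τ x), polarize rank τ u (τ y)) ≤
      cost s(u x, u y) + cost s(u (τ x), u (τ y)) := by
  have hinv := h.involutive
  by_cases hlow : rank x ≤ rank (τ x) ∧ rank y ≤ rank (τ y)
  · exact h.toIsFolding.cost_polarize_add_le hcost u hlow.1 hlow.2
  by_cases hhigh : rank (τ x) ≤ rank x ∧ rank (τ y) ≤ rank y
  · have hle := h.toIsFolding.cost_polarize_add_le hcost u (x := τ x) (y := τ y)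
      (by rw [hinv]; exact hhigh.1) (by rw [hinv]; exact hhigh.2)
    rwa [hinv, hinv, add_comm, add_comm (cost s(u (τ x), u (τ y)))] at hle
  have hcross : y = τ x := by
    rcases le_or_gt (rank x) (rank (τ x)) with hx | hx
    · exact h.eq_of_adj hxy (by lia) (by lia)
    · rw [h.eq_of_adj hxy.symm (by lia) hx, hinv]
  rw [hcross, hinv, Sym2.eq_swap (a := polarize rank τ u (τ x)), Sym2.eq_swap (a := u (τ x)),
    h.mk_polarize]

theorem IsPolarizer.edgeEnergy_polarize_le (h : IsPolarizer G rank τ)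
    (hcost : ∀ a a' b b', cost s(max a a', max b b') + cost s(min a a', min b b') ≤
      cost s(a, b) + cost s(a', b'))
    (u : α → R) : edgeEnergy G cost (polarize rank τ u) ≤ edgeEnergy G cost u := by
  let φ : G →g G := ⟨τ, fun hxy => h.map_adj hxy⟩
  have hcomp : φ ∘ φ = id := h.involutive.comp_self
  have hφ : Function.Involutive φ.mapEdgeSet := fun e => Subtype.ext <| by
    rw [φ.mapEdgeSet_coe, φ.mapEdgeSet_coe, Sym2.map_map, hcomp, Sym2.map_id, id]
  refine tsum_le_tsum_of_involutive hφ ?_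
  rintro ⟨e, he⟩
  induction e with
  | h x y => exact h.cost_polarize_add_le hcost u he

end Polarize

end EdgeEnergy

section EdgeEnergyContinuity

variable {α R : Type*} {G : SimpleGraph α} {cost : Sym2 R → ℝ≥0∞} {f : R → R}

theorem edgeEnergy_comp_le (hf : ∀ e, cost (e.map f) ≤ cost e) (u : α → R) :
    edgeEnergy G cost (f ∘ u) ≤ edgeEnergy G cost u :=
  ENNReal.tsum_le_tsum fun e => by simpa only [Sym2.map_map] using hf (e.1.map u)

theorem edgeEnergy_comp_eq_mul {c : ℝ≥0∞} (hf : ∀ e, cost (e.map f) = c * cost e) (u : α → R) :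
    edgeEnergy G cost (f ∘ u) = c * edgeEnergy G cost u := by
  rw [edgeEnergy, edgeEnergy, ← ENNReal.tsum_mul_left]
  exact tsum_congr fun e => by rw [← hf, Sym2.map_map]

theorem lowerSemicontinuous_edgeEnergy [TopologicalSpace R]
    (hcost : Continuous fun p : R × R => cost s(p.1, p.2)) :
    LowerSemicontinuous (edgeEnergy G cost) := by
  refine lowerSemicontinuous_tsum fun ⟨e, _⟩ => Continuous.lowerSemicontinuous ?_
  induction e with
  | h x y => exact hcost.comp (f := fun u : α → R => (u x, u y)) (by fun_prop)

end EdgeEnergyContinuity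

section PowSum

variable {α : Type*} {r : ℝ} {u : α → ℝ≥0}

/-- The power sum `‖u‖_r ^ r`. -/
def powSum (r : ℝ) (u : α → ℝ≥0) : ℝ≥0∞ :=
  ∑' x, (u x : ℝ≥0∞) ^ r

theorem powSum_smul (hr : 0 ≤ r) (c : ℝ≥0) (u : α → ℝ≥0) :
    powSum r (c • u) = (c : ℝ≥0∞) ^ r * powSum r u := by
  rw [powSum, powSum, ← ENNReal.tsum_mul_left]
  exact tsum_congr fun x => by
    rw [Pi.smul_apply, smul_eq_mul, ENNReal.coe_mul, ENNReal.mul_rpow_of_nonneg _ _ hr]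

theorem powSum_mono (hr : 0 ≤ r) : Monotone (powSum r : (α → ℝ≥0) → ℝ≥0∞) := fun _ _ h =>
  ENNReal.tsum_le_tsum fun x => ENNReal.rpow_le_rpow (ENNReal.coe_le_coe.2 (h x)) hr

theorem IsRearrangement.powSum_eq {w : α → ℝ≥0} (h : IsRearrangement u w) (r : ℝ) :
    powSum r u = powSum r w :=
  h fun t => (t : ℝ≥0∞) ^ r

theorem lowerSemicontinuous_powSum (r : ℝ) :
    LowerSemicontinuous (powSum r : (α → ℝ≥0) → ℝ≥0∞) :=
  lowerSemicontinuous_tsum fun x => (ENNReal.continuous_rpow_const.comp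
    (ENNReal.continuous_coe.comp (continuous_apply x))).lowerSemicontinuous

theorem isCompact_setOf_powSum_le (hr : 0 < r) {C : ℝ≥0∞} (hC : C ≠ ⊤) :
    IsCompact {u : α → ℝ≥0 | powSum r u ≤ C} := by
  have hclosed : IsClosed {u : α → ℝ≥0 | powSum r u ≤ C} :=
    (lowerSemicontinuous_powSum r).isClosed_preimage C
  refine (isCompact_univ_pi fun _ : α => isCompact_Icc (a := 0)
    (b := (C ^ r⁻¹).toNNReal)).of_isClosed_subset hclosed fun u hu x _ => ⟨zero_le, ?_⟩
  have hpow : (u x : ℝ≥0∞) ^ r ≤ C := (ENNReal.le_tsum x).trans hu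
  rw [← ENNReal.coe_le_coe, ENNReal.coe_toNNReal (ENNReal.rpow_ne_top_of_nonneg
    (inv_nonneg.2 hr.le) hC)]
  exact (ENNReal.le_rpow_inv_iff hr).2 hpow

theorem tendsto_powSum_tsub (hr : 0 ≤ r) (u : α → ℝ≥0) :
    Tendsto (fun t : ℝ≥0 => powSum r fun x => u x - t) (𝓝 0) (𝓝 (powSum r u)) := by
  have hle : ∀ t, powSum r (fun x => u x - t) ≤ powSum r u := fun t =>
    powSum_mono hr fun x => tsub_le_self
  refine tendsto_order.2 ⟨fun a ha => ?_, fun a ha => .of_forall fun t => (hle t).trans_lt ha⟩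
  have hlim : Tendsto (fun (t : ℝ≥0) x => u x - t) (𝓝 0) (𝓝 u) :=
    tendsto_pi_nhds.2 fun x => by
      simpa only [tsub_zero, id] using
        (tendsto_const_nhds (x := u x)).sub (tendsto_id (x := 𝓝 (0 : ℝ≥0)))
  exact hlim.eventually (lowerSemicontinuous_powSum r u a ha)

theorem finite_support_tsub (hr : 0 < r) (hu : powSum r u ≠ ⊤) {t : ℝ≥0} (ht : 0 < t) :
    (fun x => u x - t).support.Finite := by
  have hpos : (t : ℝ≥0∞) ^ r ≠ 0 := (ENNReal.rpow_pos (ENNReal.coe_pos.2 ht) ENNReal.coe_ne_top).ne'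
  refine (ENNReal.finite_const_le_of_tsum_ne_top hu hpos).subset fun x hx => ?_
  have htx : t < u x := tsub_pos_iff_lt.1 (pos_iff_ne_zero.2 hx)
  exact ENNReal.rpow_le_rpow (ENNReal.coe_le_coe.2 htx.le) hr.le

end PowSum

section Action

variable {α : Type*} {G : SimpleGraph α} {ω : ℝ≥0}

/-- The squared difference of an unordered pair. -/
def sqDiff : Sym2 ℝ≥0 → ℝ≥0∞ :=
  Sym2.lift ⟨fun a b => ENNReal.ofReal (((a : ℝ) - b) ^ 2), fun _ _ =>
    congrArg _ (sub_sq_comm _ _)⟩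

theorem sqDiff_mk (a b : ℝ≥0) : sqDiff s(a, b) = ENNReal.ofReal (((a : ℝ) - b) ^ 2) :=
  rfl

theorem continuous_sqDiff : Continuous fun p : ℝ≥0 × ℝ≥0 => sqDiff s(p.1, p.2) :=
  ENNReal.continuous_ofReal.comp (by fun_prop)

theorem sqDiff_max_add_sqDiff_min_le (a a' b b' : ℝ≥0) :
    sqDiff s(max a a', max b b') + sqDiff s(min a a', min b b') ≤
      sqDiff s(a, b) + sqDiff s(a', b') := by
  simp only [sqDiff_mk]
  rw [← ENNReal.ofReal_add (sq_nonneg _) (sq_nonneg _),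
    ← ENNReal.ofReal_add (sq_nonneg _) (sq_nonneg _)]
  refine ENNReal.ofReal_le_ofReal ?_
  rcases le_total a a' with ha | ha <;> rcases le_total b b' with hb | hb <;>
    simp only [ha, hb, sup_of_le_left, sup_of_le_right, inf_of_le_left, inf_of_le_right] <;>
    nlinarith [mul_nonneg (sub_nonneg.2 (NNReal.coe_le_coe.2 ha))
      (sub_nonneg.2 (NNReal.coe_le_coe.2 hb))]

theorem sqDiff_le_add (a b : ℝ≥0) :
    sqDiff s(a, b) ≤ (a : ℝ≥0∞) ^ (2 : ℝ) + (b : ℝ≥0∞) ^ (2 : ℝ) := by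
  have hle : ((a : ℝ) - b) ^ 2 ≤ (a ^ 2 + b ^ 2 : ℝ≥0) := by
    push_cast
    nlinarith [mul_nonneg a.coe_nonneg b.coe_nonneg]
  calc sqDiff s(a, b) ≤ ENNReal.ofReal (a ^ 2 + b ^ 2 : ℝ≥0) := ENNReal.ofReal_le_ofReal hle
    _ = (a : ℝ≥0∞) ^ (2 : ℝ) + (b : ℝ≥0∞) ^ (2 : ℝ) := by
      rw [ENNReal.ofReal_coe_nnreal, ENNReal.coe_add, ENNReal.coe_pow, ENNReal.coe_pow,
        ENNReal.rpow_two, ENNReal.rpow_two]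

theorem sqDiff_map_mul (c : ℝ≥0) (e : Sym2 ℝ≥0) :
    sqDiff (e.map (c * ·)) = (c : ℝ≥0∞) ^ (2 : ℝ) * sqDiff e := by
  induction e with
  | h a b =>
    have hmul : ((c * a : ℝ≥0) - (c * b : ℝ≥0) : ℝ) ^ 2 = (c : ℝ) ^ 2 * ((a : ℝ) - b) ^ 2 := by
      push_cast
      ring
    rw [Sym2.map_mk, sqDiff_mk, sqDiff_mk, hmul, ENNReal.ofReal_mul (sq_nonneg _),
      ENNReal.ofReal_pow c.coe_nonneg, ENNReal.ofReal_coe_nnreal, ENNReal.rpow_two]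

theorem sqDiff_map_tsub_le (t : ℝ≥0) (e : Sym2 ℝ≥0) : sqDiff (e.map (· - t)) ≤ sqDiff e := by
  induction e with
  | h a b =>
    rw [Sym2.map_mk, sqDiff_mk, sqDiff_mk, NNReal.coe_sub_def, NNReal.coe_sub_def]
    refine ENNReal.ofReal_le_ofReal (sq_le_sq.2 ?_)
    simpa only [sub_sub_sub_cancel_right] using abs_max_sub_max_le_abs ((a : ℝ) - t) (b - t) 0

/-- The functional `‖∇u‖₂² + ω ‖u‖₂²` on a graph. -/
def action (G : SimpleGraph α) (ω : ℝ≥0) (u : α → ℝ≥0) : ℝ≥0∞ :=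
  edgeEnergy G sqDiff u + ω * powSum 2 u

theorem action_smul (c : ℝ≥0) (u : α → ℝ≥0) :
    action G ω (c • u) = (c : ℝ≥0∞) ^ (2 : ℝ) * action G ω u := by
  have henergy : edgeEnergy G sqDiff (c • u) = (c : ℝ≥0∞) ^ (2 : ℝ) * edgeEnergy G sqDiff u :=
    edgeEnergy_comp_eq_mul (sqDiff_map_mul c) u
  rw [action, action, henergy, powSum_smul zero_le_two, mul_add, mul_left_comm]

theorem action_tsub_le (t : ℝ≥0) (u : α → ℝ≥0) : action G ω (fun x => u x - t) ≤ action G ω u :=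
  add_le_add (edgeEnergy_comp_le (sqDiff_map_tsub_le t) u)
    (mul_le_mul_right (powSum_mono zero_le_two fun _ => tsub_le_self) _)

theorem lowerSemicontinuous_action : LowerSemicontinuous (action G ω) :=
  (lowerSemicontinuous_edgeEnergy continuous_sqDiff).add <|
    (ENNReal.continuous_const_mul ENNReal.coe_ne_top).comp_lowerSemicontinuous
      (lowerSemicontinuous_powSum 2) fun _ _ h => mul_le_mul_right h _

theorem mul_powSum_rpow_le_action {r : ℝ} (hr : 0 < r) {m : ℝ≥0∞}
    (hm : ∀ v : α → ℝ≥0, v.support.Finite → powSum r v = 1 → m ≤ action G ω v) {v : α → ℝ≥0}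
    (hv : v.support.Finite) (hv_top : powSum r v ≠ ⊤) :
    m * powSum r v ^ (2 / r) ≤ action G ω v := by
  rcases eq_or_ne (powSum r v) 0 with h0 | h0
  · rw [h0, ENNReal.zero_rpow_of_pos (by positivity), mul_zero]
    exact zero_le
  obtain ⟨c, hc⟩ : ∃ c : ℝ≥0, (c : ℝ≥0∞) = powSum r v ^ (-r⁻¹) :=
    ⟨_, ENNReal.coe_toNNReal (ENNReal.rpow_ne_top_of_ne_zero h0 hv_top)⟩
  have hnorm : powSum r (c • v) = 1 := by
    rw [powSum_smul hr.le, hc, ← ENNReal.rpow_mul, neg_mul, inv_mul_cancel₀ hr.ne',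
      ENNReal.rpow_neg_one, ENNReal.inv_mul_cancel h0 hv_top]
  have hscale : (c : ℝ≥0∞) ^ (2 : ℝ) * powSum r v ^ (2 / r) = 1 := by
    rw [hc, ← ENNReal.rpow_mul, ← ENNReal.rpow_add _ _ h0 hv_top]
    ring_nf
    exact ENNReal.rpow_zero
  calc m * powSum r v ^ (2 / r)
      ≤ action G ω (c • v) * powSum r v ^ (2 / r) :=
        mul_le_mul_left (hm _ (hv.subset (Function.support_const_smul_subset c v)) hnorm) _
    _ = action G ω v := by rw [action_smul, mul_right_comm, hscale, one_mul]

/-- Truncating `w` to `w - t` gives finite support without raising the action, and costs no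
`r`-norm in the limit `t → 0`. -/
theorem le_action_of_forall_finite_support {r : ℝ} (hr : 0 < r) {m : ℝ≥0∞}
    (hm : ∀ v : α → ℝ≥0, v.support.Finite → powSum r v = 1 → m ≤ action G ω v) {w : α → ℝ≥0}
    (hw : powSum r w = 1) : m ≤ action G ω w := by
  have hw_top : powSum r w ≠ ⊤ := hw ▸ ENNReal.one_ne_top
  have htrunc : ∀ t : ℝ≥0, 0 < t → m * powSum r (fun x => w x - t) ^ (2 / r) ≤ action G ω w :=
    fun t ht => (mul_powSum_rpow_le_action hr hm (finite_support_tsub hr hw_top ht)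
      (ne_top_of_le_ne_top hw_top (powSum_mono hr.le fun _ => tsub_le_self))).trans
        (action_tsub_le t w)
  have hlim : Tendsto (fun t : ℝ≥0 => m * powSum r (fun x => w x - t) ^ (2 / r)) (𝓝[>] 0)
      (𝓝 (m * 1)) := by
    have hpow :=
      ((tendsto_powSum_tsub hr.le w).mono_left (nhdsWithin_le_nhds (s := Set.Ioi 0))).ennrpow_const
        (2 / r)
    rw [hw, ENNReal.one_rpow] at hpow
    exact ENNReal.Tendsto.const_mul hpow (Or.inl one_ne_zero)
  rw [← mul_one m]
  exact le_of_tendsto hlim (eventually_mem_nhdsWithin.mono htrunc)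

end Action

section Roots

variable {d : ℕ} {β : ZLat d}

theorem latE_eq_single (i : Fin d) : latE i = Pi.single i 1 := by
  ext j
  exact (Pi.single_apply i (1 : ℤ) j).symm

/-- The positive roots of the root system `B_d`; their multiples by `1 / (β ⬝ᵥ β)` are the vectors
of `E⃗`. -/
def IsPositiveRoot (β : ZLat d) : Prop :=
  (∃ i, β = latE i) ∨ ∃ i j : Fin d, i < j ∧ (β = latE i + latE j ∨ β = latE i - latE j)

theorem IsPositiveRoot.dotProduct_self (h : IsPositiveRoot β) : β ⬝ᵥ β = 1 ∨ β ⬝ᵥ β = 2 := by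
  rcases h with ⟨i, rfl⟩ | ⟨i, j, hij, rfl | rfl⟩ <;>
    simp [latE_eq_single, *, ne_of_gt, ne_of_lt]

theorem IsPositiveRoot.exists_apply_eq_one (h : IsPositiveRoot β) : ∃ i, β i = 1 := by
  rcases h with ⟨i, rfl⟩ | ⟨i, j, hij, rfl | rfl⟩
  · exact ⟨i, by simp [latE]⟩
  · exact ⟨i, by simp [latE, hij.ne]⟩
  · exact ⟨i, by simp [latE, hij.ne]⟩

/-- The value `2 ⟨β, x⟩ / ⟨β, β⟩` at `x` of the coroot of `β`; the division is exact when `β` is a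
root. -/
def coroot (β x : ZLat d) : ℤ :=
  2 * (β ⬝ᵥ x) / (β ⬝ᵥ β)

theorem IsPositiveRoot.dotProduct_self_mul_coroot (h : IsPositiveRoot β) (x : ZLat d) :
    (β ⬝ᵥ β) * coroot β x = 2 * (β ⬝ᵥ x) := by
  rw [coroot]
  rcases h.dotProduct_self with hβ | hβ <;> rw [hβ] <;> lia

theorem IsPositiveRoot.dotProduct_self_pos (h : IsPositiveRoot β) : 0 < β ⬝ᵥ β := by
  rcases h.dotProduct_self with hβ | hβ <;> lia

theorem IsPositiveRoot.coroot_add_smul (h : IsPositiveRoot β) (x : ZLat d) (k : ℤ) :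
    coroot β (x + k • β) = coroot β x + 2 * k := by
  refine mul_left_cancel₀ h.dotProduct_self_pos.ne' ?_
  rw [mul_add, h.dotProduct_self_mul_coroot, h.dotProduct_self_mul_coroot, dotProduct_add,
    dotProduct_smul, smul_eq_mul]
  ring

theorem IsPositiveRoot.coroot_sub (h : IsPositiveRoot β) (x y : ZLat d) :
    coroot β (x - y) = coroot β x - coroot β y := by
  refine mul_left_cancel₀ h.dotProduct_self_pos.ne' ?_
  rw [mul_sub, h.dotProduct_self_mul_coroot, h.dotProduct_self_mul_coroot,
    h.dotProduct_self_mul_coroot, dotProduct_sub, mul_sub]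

/-- The reflection in the hyperplane on which the coroot of `β` takes the value `c`. -/
def wallReflection (β : ZLat d) (c : ℤ) (x : ZLat d) : ZLat d :=
  x - (coroot β x - c) • β

variable {c : ℤ}

theorem IsPositiveRoot.coroot_wallReflection (h : IsPositiveRoot β) (c : ℤ) (x : ZLat d) :
    coroot β (wallReflection β c x) = 2 * c - coroot β x := by
  rw [wallReflection, sub_eq_add_neg, ← neg_smul, h.coroot_add_smul]
  ring

theorem IsPositiveRoot.involutive_wallReflection (h : IsPositiveRoot β) (c : ℤ) :
    Function.Involutive (wallReflection β c) := by
  intro x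
  rw [wallReflection, h.coroot_wallReflection, wallReflection, sub_sub, ← add_smul]
  ring_nf

theorem dotProduct_self_sub_smul (v β : ZLat d) (k : ℤ) :
    (v - k • β) ⬝ᵥ (v - k • β) = v ⬝ᵥ v - k * (2 * (β ⬝ᵥ v)) + k ^ 2 * (β ⬝ᵥ β) := by
  simp only [dotProduct_sub, sub_dotProduct, dotProduct_smul, smul_dotProduct, smul_eq_mul,
    dotProduct_comm v β]
  ring

theorem IsPositiveRoot.dotProduct_self_wallReflection_sub (h : IsPositiveRoot β) (c : ℤ)
    (x y : ZLat d) :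
    (wallReflection β c x - wallReflection β c y) ⬝ᵥ
      (wallReflection β c x - wallReflection β c y) = (x - y) ⬝ᵥ (x - y) := by
  have hsub : wallReflection β c x - wallReflection β c y = (x - y) - coroot β (x - y) • β := by
    rw [wallReflection, wallReflection, h.coroot_sub, sub_smul, sub_smul, sub_smul]
    abel
  rw [hsub, dotProduct_self_sub_smul, ← h.dotProduct_self_mul_coroot]
  ring

/-- A unit lattice vector with `⟨β, v⟩ ≥ ⟨β, β⟩` is no longer than its projection to `β`. -/
theorem IsPositiveRoot.eq_of_two_le_coroot (h : IsPositiveRoot β) {v : ZLat d} (hv : v ⬝ᵥ v = 1)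
    (hcoroot : 2 ≤ coroot β v) : v = β := by
  have hβ : 1 ≤ β ⬝ᵥ β := h.dotProduct_self_pos
  have hdist := dotProduct_self_sub_smul v β 1
  rw [hv, ← h.dotProduct_self_mul_coroot, one_smul] at hdist
  have hle : (v - β) ⬝ᵥ (v - β) ≤ 0 := by nlinarith
  have hnonneg : 0 ≤ (v - β) ⬝ᵥ (v - β) := Finset.sum_nonneg fun i _ => mul_self_nonneg _
  exact sub_eq_zero.1 (dotProduct_self_eq_zero.1 (hle.antisymm hnonneg))

end Roots

section LatticeGraph

variable {d : ℕ}

theorem latDist_eq_one_tfae (x y : ZLat d) :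
    [latDist x y = 1, ∃ i, y = x + latE i ∨ x = y + latE i, (x - y) ⬝ᵥ (x - y) = 1].TFAE := by
  tfae_have 1 → 2 := by
    intro h
    obtain ⟨i, -, hi⟩ := Finset.exists_ne_zero_of_sum_ne_zero (h.trans_ne one_ne_zero)
    rw [latDist, ← Finset.add_sum_erase _ _ (Finset.mem_univ i)] at h
    have hrest : ∑ j ∈ Finset.univ.erase i, (x j - y j).natAbs = 0 := by lia
    have heq : ∀ j ≠ i, x j = y j := fun j hj => by
      have := Finset.sum_eq_zero_iff.1 hrest j (Finset.mem_erase.2 ⟨hj, Finset.mem_univ j⟩)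
      lia
    refine ⟨i, (show x i + 1 = y i ∨ y i + 1 = x i by lia).imp ?_ ?_⟩ <;> intro hone <;> ext j <;>
      rcases eq_or_ne j i with rfl | hj <;> simp [latE, *]
  tfae_have 2 → 3 := by
    rintro ⟨i, rfl | rfl⟩ <;> simp [latE_eq_single]
  tfae_have 3 → 1 := by
    intro h
    have hsq : ∑ i, (x i - y i).natAbs ^ 2 = 1 := by
      zify
      simpa only [sq_abs, dotProduct, ← pow_two, Pi.sub_apply] using h
    have hle : latDist x y ≤ 1 := hsq ▸ Finset.sum_le_sum fun i _ => Nat.le_self_pow two_ne_zero _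
    refine hle.antisymm (Nat.one_le_iff_ne_zero.2 fun hzero => ?_)
    have heq : ∀ i, (x i - y i).natAbs = 0 := fun i =>
      Finset.sum_eq_zero_iff.1 hzero i (Finset.mem_univ i)
    simp [heq] at hsq
  tfae_finish

/-- The lattice graph `ℤ^d`. -/
def latticeGraph (d : ℕ) : SimpleGraph (ZLat d) where
  Adj x y := latDist x y = 1
  symm := ⟨fun x y h => by simpa only [latDist, ← Int.natAbs_neg (y _ - x _), neg_sub] using h⟩
  loopless := ⟨fun x h => by simp [latDist] at h⟩

theorem latticeGraph_adj_iff_exists {x y : ZLat d} :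
    (latticeGraph d).Adj x y ↔ ∃ i, y = x + latE i ∨ x = y + latE i :=
  (latDist_eq_one_tfae x y).out 0 1

theorem latticeGraph_adj_iff_dotProduct {x y : ZLat d} :
    (latticeGraph d).Adj x y ↔ (x - y) ⬝ᵥ (x - y) = 1 :=
  (latDist_eq_one_tfae x y).out 0 2

end LatticeGraph

section AlcoveRank

variable {d : ℕ} {β : ZLat d} {c : ℤ}

/-- The coordinates, scaled by `2 d + 1`, of a point in the interior of the fundamental alcove: at
`alcovePoint d / (2 d + 1)` every positive coroot takes a value strictly between `0` and `1`. -/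
def alcovePoint (d : ℕ) (i : Fin d) : ℤ :=
  d - i

theorem alcovePoint_pos (i : Fin d) : 0 < alcovePoint d i :=
  sub_pos.2 (Nat.cast_lt.2 i.isLt)

theorem alcovePoint_le (i : Fin d) : alcovePoint d i ≤ d :=
  sub_le_self _ (Nat.cast_nonneg _)

theorem alcovePoint_lt_of_lt {i j : Fin d} (hij : i < j) : alcovePoint d j < alcovePoint d i :=
  sub_lt_sub_left (Nat.cast_lt.2 hij) _

theorem IsPositiveRoot.dotProduct_alcovePoint_pos (h : IsPositiveRoot β) :
    0 < β ⬝ᵥ alcovePoint d := by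
  rcases h with ⟨i, rfl⟩ | ⟨i, j, hij, rfl | rfl⟩ <;>
    simp only [latE_eq_single, add_dotProduct, sub_dotProduct, single_one_dotProduct]
  · exact alcovePoint_pos i
  · exact add_pos (alcovePoint_pos i) (alcovePoint_pos j)
  · exact sub_pos.2 (alcovePoint_lt_of_lt hij)

theorem dotProduct_alcovePoint_le (x : ZLat d) : x ⬝ᵥ alcovePoint d ≤ d * (x ⬝ᵥ x) := by
  rw [dotProduct, dotProduct, Finset.mul_sum]
  refine Finset.sum_le_sum fun i _ => ?_
  calc x i * alcovePoint d i ≤ x i ^ 2 * alcovePoint d i :=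
        mul_le_mul_of_nonneg_right (Int.le_self_sq _) (alcovePoint_pos i).le
    _ ≤ x i ^ 2 * d := mul_le_mul_of_nonneg_left (alcovePoint_le i) (sq_nonneg _)
    _ = d * (x i * x i) := by ring

theorem IsPositiveRoot.two_mul_dotProduct_alcovePoint_lt (h : IsPositiveRoot β) :
    2 * (β ⬝ᵥ alcovePoint d) < (2 * d + 1) * (β ⬝ᵥ β) := by
  linarith [dotProduct_alcovePoint_le β, h.dotProduct_self_pos]

/-- The squared distance from `x` to the point `alcovePoint d / (2 d + 1)`, scaled by
`(2 d + 1) ^ 2`. -/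
def alcoveRank (x : ZLat d) : ℕ :=
  ∑ i, ((2 * d + 1) * x i - alcovePoint d i).natAbs ^ 2

theorem finite_setOf_alcoveRank_le (n : ℕ) : {x : ZLat d | alcoveRank x ≤ n}.Finite := by
  refine (Set.finite_Icc (fun _ => -(n + d : ℤ)) fun _ => (n + d : ℤ)).subset fun x hx => ?_
  have hbound : ∀ i, |x i| ≤ n + d := by
    intro i
    have hsq : ((2 * d + 1) * x i - alcovePoint d i).natAbs ^ 2 ≤ n :=
      (Finset.single_le_sum (fun _ _ => Nat.zero_le _) (Finset.mem_univ i)).trans hx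
    have hle : |(2 * d + 1) * x i - alcovePoint d i| ≤ n :=
      (Int.abs_eq_natAbs _).trans_le (Nat.cast_le.2 ((Nat.le_self_pow two_ne_zero _).trans hsq))
    calc |x i| ≤ (2 * d + 1) * |x i| := le_mul_of_one_le_left (abs_nonneg _) (by lia)
      _ = |((2 * d + 1) * x i - alcovePoint d i) + alcovePoint d i| := by
        rw [sub_add_cancel, abs_mul, abs_of_pos (by lia : (0 : ℤ) < 2 * d + 1)]
      _ ≤ n + d := (abs_add_le _ _).trans (add_le_add hle
        ((abs_of_pos (alcovePoint_pos i)).trans_le (alcovePoint_le i)))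
  exact ⟨fun i => (abs_le.1 (hbound i)).1, fun i => (abs_le.1 (hbound i)).2⟩

theorem natCast_alcoveRank (x : ZLat d) :
    (alcoveRank x : ℤ) = ((2 * d + 1 : ℤ) • x - alcovePoint d) ⬝ᵥ
      ((2 * d + 1 : ℤ) • x - alcovePoint d) := by
  simp [alcoveRank, dotProduct, pow_two]

theorem IsPositiveRoot.alcoveRank_wallReflection (h : IsPositiveRoot β) (c : ℤ) (x : ZLat d) :
    (alcoveRank (wallReflection β c x) : ℤ) = alcoveRank x + (2 * d + 1) * ((coroot β x - c) *
      (2 * (β ⬝ᵥ alcovePoint d) - c * ((2 * d + 1) * (β ⬝ᵥ β)))) := by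
  have hsub : (2 * d + 1 : ℤ) • wallReflection β c x - alcovePoint d =
      ((2 * d + 1 : ℤ) • x - alcovePoint d) - ((2 * d + 1) * (coroot β x - c)) • β := by
    rw [wallReflection, smul_sub, smul_smul]
    abel
  have hpair : β ⬝ᵥ ((2 * d + 1 : ℤ) • x - alcovePoint d) =
      (2 * d + 1) * (β ⬝ᵥ x) - β ⬝ᵥ alcovePoint d := by
    rw [dotProduct_sub, dotProduct_smul, smul_eq_mul]
  rw [natCast_alcoveRank, natCast_alcoveRank, hsub, dotProduct_self_sub_smul, hpair]
  linear_combination (2 * d + 1) ^ 2 * (coroot β x - c) * h.dotProduct_self_mul_coroot x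

theorem IsPositiveRoot.alcoveRank_lt_wallReflection_zero_iff (h : IsPositiveRoot β) {x : ZLat d} :
    alcoveRank x < alcoveRank (wallReflection β 0 x) ↔ 0 < coroot β x := by
  rw [← Nat.cast_lt (α := ℤ), h.alcoveRank_wallReflection, lt_add_iff_pos_right, sub_zero,
    zero_mul, sub_zero, mul_pos_iff_of_pos_left (by lia),
    mul_pos_iff_of_pos_right (mul_pos two_pos h.dotProduct_alcovePoint_pos)]

theorem IsPositiveRoot.alcoveRank_lt_wallReflection_one_iff (h : IsPositiveRoot β) {x : ZLat d} :
    alcoveRank x < alcoveRank (wallReflection β 1 x) ↔ coroot β x < 1 := by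
  have hneg : 2 * (β ⬝ᵥ alcovePoint d) - 1 * ((2 * d + 1) * (β ⬝ᵥ β)) < 0 := by
    linarith [h.two_mul_dotProduct_alcovePoint_lt]
  rw [← Nat.cast_lt (α := ℤ), h.alcoveRank_wallReflection, lt_add_iff_pos_right,
    mul_pos_iff_of_pos_left (by lia), ← neg_mul_neg, mul_pos_iff_of_pos_right (neg_pos.2 hneg),
    neg_pos, sub_neg]

theorem IsPositiveRoot.isFolding_wallReflection (h : IsPositiveRoot β) (hc : c = 0 ∨ c = 1) :
    IsFolding alcoveRank (wallReflection β c) where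
  involutive := h.involutive_wallReflection c
  eq_self_of_rank_eq x hx := by
    have hinv := h.involutive_wallReflection c x
    have hcoroot := h.coroot_wallReflection c x
    have hfix : coroot β x = c := by
      rcases hc with rfl | rfl
      · have h1 := h.alcoveRank_lt_wallReflection_zero_iff (x := x)
        have h2 := h.alcoveRank_lt_wallReflection_zero_iff (x := wallReflection β 0 x)
        rw [hinv] at h2
        lia
      · have h1 := h.alcoveRank_lt_wallReflection_one_iff (x := x)
        have h2 := h.alcoveRank_lt_wallReflection_one_iff (x := wallReflection β 1 x)
        rw [hinv] at h2
        lia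
    rw [wallReflection, hfix, sub_self, zero_smul, sub_zero]

theorem IsPositiveRoot.eq_wallReflection_of_adj (h : IsPositiveRoot β) {x y : ZLat d}
    (hxy : (latticeGraph d).Adj x y) (hx : coroot β x < c) (hy : c < coroot β y) :
    y = wallReflection β c x := by
  have hnorm := latticeGraph_adj_iff_dotProduct.1 hxy.symm
  have hsub : y - x = β := h.eq_of_two_le_coroot hnorm (by rw [h.coroot_sub]; lia)
  have hy_eq : y = x + (1 : ℤ) • β := by rw [one_smul, ← hsub, add_sub_cancel]
  rw [hy_eq, h.coroot_add_smul] at hy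
  have hx_eq : coroot β x - c = -1 := by lia
  rw [hy_eq, wallReflection, hx_eq, neg_smul, sub_neg_eq_add]

theorem IsPositiveRoot.isPolarizer_wallReflection (h : IsPositiveRoot β) (hc : c = 0 ∨ c = 1) :
    IsPolarizer (latticeGraph d) alcoveRank (wallReflection β c) where
  toIsFolding := h.isFolding_wallReflection hc
  map_adj x y hxy := by
    rw [latticeGraph_adj_iff_dotProduct] at hxy ⊢
    rwa [h.dotProduct_self_wallReflection_sub]
  eq_of_adj x y hxy hx hy := by
    have hinv := h.involutive_wallReflection c
    rw [← hinv y, hinv (wallReflection β c y)] at hy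
    rcases hc with rfl | rfl
    · rw [h.alcoveRank_lt_wallReflection_zero_iff] at hx hy
      rw [h.coroot_wallReflection] at hy
      rw [h.eq_wallReflection_of_adj hxy.symm (by lia) hx, hinv]
    · rw [h.alcoveRank_lt_wallReflection_one_iff] at hx hy
      rw [h.coroot_wallReflection] at hy
      exact h.eq_wallReflection_of_adj hxy hx (by lia)

end AlcoveRank

section SchwarzSymmetric

variable {d : ℕ} {β : ZLat d} {u : ZLat d → ℝ≥0}

/-- The reflections in the hyperplanes on which a positive coroot takes the value `0` or `1`. -/
def wallReflections (d : ℕ) : Set (ZLat d → ZLat d) :=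
  {τ | ∃ β c, IsPositiveRoot β ∧ (c = 0 ∨ c = 1) ∧ τ = wallReflection β c}

/-- Polarization by all wall reflections. These functions are fixed by the Schwarz rearrangement. -/
def IsSchwarzSymmetric (u : ZLat d → ℝ≥0) : Prop :=
  ∀ τ ∈ wallReflections d, IsPolarizedBy alcoveRank τ u

theorem isClosed_setOf_isSchwarzSymmetric :
    IsClosed {u : ZLat d → ℝ≥0 | IsSchwarzSymmetric u} := by
  simp only [IsSchwarzSymmetric, IsPolarizedBy, Set.ofPred_forall]
  exact isClosed_iInter fun τ => isClosed_iInter fun _ => isClosed_iInter fun x =>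
    isClosed_iInter fun _ => isClosed_le (continuous_apply _) (continuous_apply _)

theorem one_le_posIdx (m : ℤ) : 1 ≤ posIdx m := by
  rw [posIdx]
  split_ifs <;> lia

theorem posIdx_neg {m : ℤ} (hm : 0 < m) : posIdx (-m) = posIdx m + 1 := by
  rw [posIdx, posIdx, if_pos hm, if_neg (by lia)]
  lia

theorem posIdx_two_sub {m : ℤ} (hm : m ≤ 0) : posIdx (2 - m) = posIdx m + 1 := by
  rw [posIdx, posIdx, if_pos (by lia), if_neg (by lia)]
  lia

theorem eq_zero_of_posIdx_add_two_mul {m k : ℤ} (h : posIdx (m + 2 * k) = posIdx m) : k = 0 := by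
  rw [posIdx, posIdx] at h
  split_ifs at h <;> lia

theorem exists_posIdx_add_two_mul_eq (m : ℤ) {n : ℕ} (hn : 1 ≤ n) :
    ∃ k, posIdx (m + 2 * k) = n := by
  rcases Int.emod_two_eq_zero_or_one (n - m) with hpar | hpar
  · refine ⟨(n - m) / 2, ?_⟩
    rw [posIdx, if_pos (by lia)]
    lia
  · refine ⟨(1 - n - m) / 2, ?_⟩
    rw [posIdx, if_neg (by lia)]
    lia

theorem IsSchwarzSymmetric.exists_add_smul_le (hu : IsSchwarzSymmetric u) (hβ : IsPositiveRoot β)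
    (y : ZLat d) {n : ℕ} (hn : posIdx (coroot β y) ≤ n) :
    ∃ k : ℤ, posIdx (coroot β (y + k • β)) = n ∧ u (y + k • β) ≤ u y := by
  induction n, hn using Nat.le_induction with
  | base => exact ⟨0, by rw [zero_smul, add_zero]; exact ⟨rfl, le_rfl⟩⟩
  | succ n _ ih =>
    obtain ⟨k, hk, hle⟩ := ih
    set z := y + k • β with hz
    obtain ⟨c, hc, hidx, hlt⟩ : ∃ c, (c = 0 ∨ c = 1) ∧ posIdx (2 * c - coroot β z) = n + 1 ∧
        alcoveRank z < alcoveRank (wallReflection β c z) := by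
      rcases lt_or_ge 0 (coroot β z) with hpos | hneg
      · exact ⟨0, .inl rfl, by rw [mul_zero, zero_sub, posIdx_neg hpos, hk],
          hβ.alcoveRank_lt_wallReflection_zero_iff.2 hpos⟩
      · exact ⟨1, .inr rfl, by rw [mul_one, posIdx_two_sub hneg, hk],
          hβ.alcoveRank_lt_wallReflection_one_iff.2 (by lia)⟩
    have hmove : y + (k - (coroot β z - c)) • β = wallReflection β c z := by
      rw [wallReflection, sub_smul, hz, add_sub_assoc]
    refine ⟨k - (coroot β z - c), ?_, ?_⟩
    · rw [hmove, hβ.coroot_wallReflection, hidx]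
    · rw [hmove]
      exact (hu _ ⟨β, c, hβ, hc, rfl⟩ z hlt).trans hle

theorem IsSchwarzSymmetric.add_smul_le (hu : IsSchwarzSymmetric u) (hβ : IsPositiveRoot β)
    {y : ZLat d} {k : ℤ} (h : posIdx (coroot β y) ≤ posIdx (coroot β (y + k • β))) :
    u (y + k • β) ≤ u y := by
  obtain ⟨l, hl, hle⟩ := hu.exists_add_smul_le hβ y h
  have hkl : l - k = 0 := by
    refine eq_zero_of_posIdx_add_two_mul (m := coroot β y + 2 * k) ?_
    rw [hβ.coroot_add_smul, hβ.coroot_add_smul] at hl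
    rw [← hl]
    ring_nf
  rwa [← sub_eq_zero.1 hkl]

end SchwarzSymmetric

section Lines

variable {d : ℕ} {β : ZLat d} {u : ZLat d → ℝ≥0}

/-- The direction in `E⃗` of a positive root. -/
def rootDir (β : ZLat d) : Fin d → ℝ :=
  fun i => β i / (β ⬝ᵥ β : ℤ)

theorem IsPositiveRoot.pairing_rootDir (h : IsPositiveRoot β) (x : ZLat d) :
    pairing (rootDir β) x = coroot β x := by
  have hβ : ((β ⬝ᵥ β : ℤ) : ℝ) ≠ 0 := Int.cast_ne_zero.2 h.dotProduct_self_pos.ne'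
  have hmul : ((β ⬝ᵥ β : ℤ) : ℝ) * coroot β x = 2 * ∑ i, (β i * x i : ℝ) := by
    exact_mod_cast h.dotProduct_self_mul_coroot x
  have hsum : 2 * ∑ i, rootDir β i * x i = (coroot β x : ℝ) := by
    simp only [rootDir, div_mul_eq_mul_div, ← Finset.sum_div]
    rw [← mul_div_assoc, ← hmul, mul_div_cancel_left₀ _ hβ]
  rw [pairing, hsum, Int.floor_intCast]

theorem IsPositiveRoot.sameLine_rootDir_iff (h : IsPositiveRoot β) {x y : ZLat d} :
    sameLine (rootDir β) x y ↔ ∃ k : ℤ, y = x + k • β := by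
  have hβ : ((β ⬝ᵥ β : ℤ) : ℝ) ≠ 0 := Int.cast_ne_zero.2 h.dotProduct_self_pos.ne'
  constructor
  · rintro ⟨c, hc⟩
    obtain ⟨i, hi⟩ := h.exists_apply_eq_one
    have hcoord : ∀ j, (x j - y j : ℝ) = c * (β j / (β ⬝ᵥ β : ℤ)) := fun j => congrFun hc j
    refine ⟨y i - x i, funext fun j => ?_⟩
    have hj : (x j - y j : ℝ) = (x i - y i) * β j := by
      rw [hcoord j, hcoord i, hi]
      ring
    have hj_int : x j - y j = (x i - y i) * β j := by exact_mod_cast hj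
    rw [Pi.add_apply, Pi.smul_apply, smul_eq_mul]
    linarith
  · rintro ⟨k, rfl⟩
    refine ⟨-k * (β ⬝ᵥ β : ℤ), funext fun j => ?_⟩
    simp only [rootDir, Pi.add_apply, Pi.smul_apply, smul_eq_mul]
    push_cast
    field_simp
    ring

theorem exists_eq_rootDir_of_mem_EvecList {e : Fin d → ℝ} (he : e ∈ EvecList d) :
    ∃ β, IsPositiveRoot β ∧ e = rootDir β := by
  simp only [EvecList, List.mem_append, List.mem_map, List.mem_flatMap, List.mem_filterMap,
    List.mem_finRange, true_and, Option.ite_none_right_eq_some, Option.some.injEq] at he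
  rcases he with (⟨i, rfl⟩ | ⟨i, j, hij, rfl⟩) | ⟨i, j, hij, rfl⟩
  · refine ⟨latE i, .inl ⟨i, rfl⟩, funext fun k => ?_⟩
    simp [rootDir, latE_eq_single, stdVec, Pi.single_apply]
  · have hself : (latE i + latE j) ⬝ᵥ (latE i + latE j) = 2 := by
      simp [latE_eq_single, hij.ne, hij.ne']
    refine ⟨latE i + latE j, .inr ⟨i, j, hij, .inl rfl⟩, funext fun k => ?_⟩
    simp [rootDir, hself, latE, stdVec]
  · have hself : (latE i - latE j) ⬝ᵥ (latE i - latE j) = 2 := by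
      simp [latE_eq_single, hij.ne, hij.ne']
    refine ⟨latE i - latE j, .inr ⟨i, j, hij, .inr rfl⟩, funext fun k => ?_⟩
    simp [rootDir, hself, latE, stdVec]

theorem IsPositiveRoot.bijOn_posIdx (h : IsPositiveRoot β) (x : ZLat d) :
    Set.BijOn (fun y : {y : ZLat d // sameLine (rootDir β) x y} => posIdx (coroot β y))
      Set.univ (Set.Ici 1) := by
  refine ⟨fun y _ => one_le_posIdx _, ?_, fun n hn => ?_⟩
  · rintro ⟨y, hy⟩ - ⟨z, hz⟩ - hyz
    obtain ⟨k, rfl⟩ := h.sameLine_rootDir_iff.1 hy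
    obtain ⟨l, rfl⟩ := h.sameLine_rootDir_iff.1 hz
    have hkl : k - l = 0 := by
      refine eq_zero_of_posIdx_add_two_mul (m := coroot β x + 2 * l) ?_
      simp only [h.coroot_add_smul] at hyz
      rw [← hyz]
      ring_nf
    simp only [sub_eq_zero.1 hkl]
  · obtain ⟨k, hk⟩ := exists_posIdx_add_two_mul_eq (coroot β x) hn
    exact ⟨⟨x + k • β, h.sameLine_rootDir_iff.2 ⟨k, rfl⟩⟩, Set.mem_univ _, by
      simpa only [h.coroot_add_smul] using hk⟩

theorem IsSchwarzSymmetric.le_of_posIdx_le (hu : IsSchwarzSymmetric u) (h : IsPositiveRoot β)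
    {x : ZLat d} ⦃y z : {y : ZLat d // sameLine (rootDir β) x y}⦄
    (hyz : posIdx (coroot β y) ≤ posIdx (coroot β z)) : u z ≤ u y := by
  obtain ⟨y, hy⟩ := y
  obtain ⟨z, hz⟩ := z
  obtain ⟨k, rfl⟩ := h.sameLine_rootDir_iff.1 hy
  obtain ⟨l, rfl⟩ := h.sameLine_rootDir_iff.1 hz
  have heq : x + l • β = (x + k • β) + (l - k) • β := by
    rw [sub_smul]
    abel
  simp only [heq] at hyz ⊢
  exact hu.add_smul_le h hyz

theorem IsSchwarzSymmetric.stepR_rootDir (hu : IsSchwarzSymmetric u) (h : IsPositiveRoot β) :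
    stepR (rootDir β) u = u := by
  funext x
  rw [stepR, h.pairing_rootDir]
  exact nthLargest_eq_of_bijOn (h.bijOn_posIdx x) (hu.le_of_posIdx_le h)
    ⟨x, h.sameLine_rootDir_iff.2 ⟨0, by rw [zero_smul, add_zero]⟩⟩

theorem IsSchwarzSymmetric.RZd_eq (hd : 0 < d) (hu : IsSchwarzSymmetric u) : RZd d u = u := by
  have hlength : 0 < (EvecList d).length := by
    simp only [EvecList, List.length_append, List.length_map, List.length_finRange]
    lia
  have hiter : ∀ k, iterR d u k = u := by
    intro k
    induction k with
    | zero => rfl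
    | succ k ih =>
      rw [iterR, ih, List.getD_eq_getElem _ _ (Nat.mod_lt k hlength)]
      obtain ⟨β, hβ, he⟩ := exists_eq_rootDir_of_mem_EvecList
        (List.getElem_mem (Nat.mod_lt k hlength))
      rw [he, hu.stepR_rootDir hβ]
  funext x
  simp only [RZd, hiter]
  exact tendsto_const_nhds.limUnder_eq

end Lines

section LatticeEnergy

variable {d : ℕ} {ω : ℝ≥0}

theorem bijective_mk_add_latE : Function.Bijective fun p : ZLat d × Fin d =>
    (⟨s(p.1, p.1 + latE p.2), latticeGraph_adj_iff_exists.2 ⟨p.2, .inl rfl⟩⟩ :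
      (latticeGraph d).edgeSet) := by
  constructor
  · rintro ⟨x, i⟩ ⟨y, j⟩ h
    rcases Sym2.eq_iff.1 (congrArg Subtype.val h) with ⟨rfl, hij⟩ | ⟨rfl, hij⟩
    · have hone := congrFun (add_left_cancel hij) i
      by_contra hne
      simp_all [latE]
    · have hzero := congrFun hij i
      simp only [latE, Pi.add_apply] at hzero
      split_ifs at hzero <;> lia
  · rintro ⟨e, he⟩
    induction e with
    | h x y =>
      have hadj : (latticeGraph d).Adj x y := he
      obtain ⟨i, rfl | rfl⟩ := latticeGraph_adj_iff_exists.1 hadj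
      · exact ⟨(x, i), rfl⟩
      · exact ⟨(y, i), Subtype.ext Sym2.eq_swap⟩

theorem edgeEnergy_latticeGraph {R : Type*} (cost : Sym2 R → ℝ≥0∞) (u : ZLat d → R) :
    edgeEnergy (latticeGraph d) cost u = ∑' (x) (i), cost s(u x, u (x + latE i)) := by
  rw [edgeEnergy, ← (Equiv.ofBijective _ bijective_mk_add_latE).tsum_eq, ENNReal.tsum_prod']
  rfl

theorem gradEnergy_two_eq_edgeEnergy (u : ZLat d → ℝ≥0) :
    gradEnergy d 2 u = edgeEnergy (latticeGraph d) sqDiff u := by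
  rw [edgeEnergy_latticeGraph, gradEnergy]
  refine tsum_congr fun x => tsum_congr fun i => ?_
  rw [sqDiff_mk, Real.rpow_two, sq_abs, sub_sq_comm]

theorem edgeEnergy_sqDiff_le (u : ZLat d → ℝ≥0) :
    edgeEnergy (latticeGraph d) sqDiff u ≤ d * (2 * powSum 2 u) := by
  have hshift : ∀ i : Fin d, ∑' x, (u (x + latE i) : ℝ≥0∞) ^ (2 : ℝ) = powSum 2 u := fun i =>
    (Equiv.addRight (latE i)).tsum_eq fun x => (u x : ℝ≥0∞) ^ (2 : ℝ)
  calc edgeEnergy (latticeGraph d) sqDiff u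
      = ∑ i, ∑' x, sqDiff s(u x, u (x + latE i)) := by
        rw [edgeEnergy_latticeGraph, ENNReal.tsum_comm, tsum_fintype]
    _ ≤ ∑ i : Fin d, ∑' x, ((u x : ℝ≥0∞) ^ (2 : ℝ) + (u (x + latE i) : ℝ≥0∞) ^ (2 : ℝ)) :=
        Finset.sum_le_sum fun i _ => ENNReal.tsum_le_tsum fun x => sqDiff_le_add _ _
    _ = ∑ _i : Fin d, 2 * powSum 2 u :=
        Finset.sum_congr rfl fun i _ => by rw [ENNReal.tsum_add, hshift, two_mul, powSum]
    _ = d * (2 * powSum 2 u) := by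
        rw [Finset.sum_const, Finset.card_univ, Fintype.card_fin, nsmul_eq_mul]

theorem action_latticeGraph_ne_top {u : ZLat d → ℝ≥0} (hu : powSum 2 u ≠ ⊤) :
    action (latticeGraph d) ω u ≠ ⊤ :=
  ENNReal.add_ne_top.2 ⟨ne_top_of_le_ne_top (by finiteness) (edgeEnergy_sqDiff_le u), by finiteness⟩

theorem exists_isSchwarzSymmetric_action_le (ω : ℝ≥0) {w : ZLat d → ℝ≥0} (hw : w.support.Finite) :
    ∃ u, IsSchwarzSymmetric u ∧ IsRearrangement u w ∧
      action (latticeGraph d) ω u ≤ action (latticeGraph d) ω w := by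
  have hfold : ∀ τ ∈ wallReflections d, IsFolding alcoveRank τ := by
    rintro _ ⟨β, c, hβ, hc, rfl⟩
    exact hβ.isFolding_wallReflection hc
  have haction : ∀ τ ∈ wallReflections d, ∀ u : ZLat d → ℝ≥0,
      action (latticeGraph d) ω (polarize alcoveRank τ u) ≤ action (latticeGraph d) ω u := by
    rintro _ ⟨β, c, hβ, hc, rfl⟩ u
    have hpol := hβ.isPolarizer_wallReflection hc
    rw [action, (hpol.toIsFolding.isRearrangement_polarize u).powSum_eq]
    exact add_le_add_left (hpol.edgeEnergy_polarize_le sqDiff_max_add_sqDiff_min_le u) _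
  obtain ⟨u, huw, hle, hu⟩ := exists_isRearrangement_forall_isPolarizedBy
    finite_setOf_alcoveRank_le hfold haction hw
  exact ⟨u, hu, huw, hle⟩

end LatticeEnergy

section Compactness

variable {d : ℕ} {u : ZLat d → ℝ≥0} {r s : ℝ} {D : ℝ≥0∞}

theorem IsSchwarzSymmetric.natAbs_mul_rpow_le_powSum (hu : IsSchwarzSymmetric u) (hs : 0 ≤ s)
    (x : ZLat d) (i : Fin d) : (x i).natAbs * (u x : ℝ≥0∞) ^ s ≤ powSum s u := by
  have hβ : IsPositiveRoot (latE i : ZLat d) := .inl ⟨i, rfl⟩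
  have hcoroot : coroot (latE i) x = 2 * x i := by simp [coroot, latE_eq_single]
  have hidx : (x i).natAbs ≤ posIdx (coroot (latE i) x) := by
    rw [hcoroot, posIdx]
    split_ifs <;> lia
  have hg : Monotone fun t : ℝ≥0 => (t : ℝ≥0∞) ^ s := fun _ _ h =>
    ENNReal.rpow_le_rpow (ENNReal.coe_le_coe.2 h) hs
  calc (x i).natAbs * (u x : ℝ≥0∞) ^ s ≤ posIdx (coroot (latE i) x) * (u x : ℝ≥0∞) ^ s := by gcongr
    _ ≤ ∑' y : {y // sameLine (rootDir (latE i)) x y}, (u y : ℝ≥0∞) ^ s :=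
        natCast_pos_mul_le_tsum (hβ.bijOn_posIdx x) (hu.le_of_posIdx_le hβ) hg
          ⟨x, hβ.sameLine_rootDir_iff.2 ⟨0, by rw [zero_smul, add_zero]⟩⟩
    _ ≤ powSum s u := ENNReal.tsum_comp_le_tsum_of_injective Subtype.val_injective _

/-- The bound outside the box `[-n, n]^d` for the `r`-th power sum of a symmetric function whose
`s`-th power sum is at most `D`. -/
def tailBound (r s : ℝ) (D : ℝ≥0∞) (n : ℕ) : ℝ≥0∞ :=
  (D / (n + 1 : ℕ)) ^ ((r - s) / s) * D

theorem tendsto_tailBound (hs : 0 < s) (hsr : s < r) (hD : D ≠ ⊤) :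
    Tendsto (tailBound r s D) atTop (𝓝 0) := by
  have hdiv : Tendsto (fun n : ℕ => D / (n + 1 : ℕ)) atTop (𝓝 0) := by
    rw [← ENNReal.div_top (a := D)]
    exact ENNReal.Tendsto.const_div
      (ENNReal.tendsto_nat_nhds_top.comp (tendsto_add_atTop_nat 1)) (.inr hD)
  have hpow := hdiv.ennrpow_const ((r - s) / s)
  rw [ENNReal.zero_rpow_of_pos (div_pos (sub_pos.2 hsr) hs)] at hpow
  have hmul := ENNReal.Tendsto.mul_const hpow (.inr hD)
  rwa [zero_mul] at hmul

theorem IsSchwarzSymmetric.rpow_le_of_notMem_Icc (hu : IsSchwarzSymmetric u) (hs : 0 < s)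
    (hsr : s ≤ r) (hD : powSum s u ≤ D) {n : ℕ} {x : ZLat d}
    (hx : x ∉ Finset.Icc (fun _ => -(n : ℤ)) fun _ => (n : ℤ)) :
    (u x : ℝ≥0∞) ^ r ≤ (D / (n + 1 : ℕ)) ^ ((r - s) / s) * (u x : ℝ≥0∞) ^ s := by
  obtain ⟨i, hi⟩ : ∃ i, n + 1 ≤ (x i).natAbs := by
    by_contra! hlt
    refine hx (Finset.mem_Icc.2 ⟨fun i => ?_, fun i => ?_⟩) <;> have := hlt i <;> lia
  have hdecay : (u x : ℝ≥0∞) ^ s ≤ D / (n + 1 : ℕ) := by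
    rw [ENNReal.le_div_iff_mul_le (by simp) (by simp), mul_comm]
    calc ((n + 1 : ℕ) : ℝ≥0∞) * (u x : ℝ≥0∞) ^ s ≤ (x i).natAbs * (u x : ℝ≥0∞) ^ s := by gcongr
      _ ≤ D := (hu.natAbs_mul_rpow_le_powSum hs.le x i).trans hD
  calc (u x : ℝ≥0∞) ^ r = ((u x : ℝ≥0∞) ^ s) ^ ((r - s) / s) * (u x : ℝ≥0∞) ^ s := by
        rw [← ENNReal.rpow_mul, mul_div_cancel₀ _ hs.ne',
          ← ENNReal.rpow_add_of_nonneg _ _ (sub_nonneg.2 hsr) hs.le, sub_add_cancel]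
    _ ≤ _ := by gcongr

theorem IsSchwarzSymmetric.powSum_le_sum_add_tailBound (hu : IsSchwarzSymmetric u) (hs : 0 < s)
    (hsr : s ≤ r) (hD : powSum s u ≤ D) (n : ℕ) :
    powSum r u ≤ ∑ x ∈ Finset.Icc (fun _ => -(n : ℤ)) fun _ => (n : ℤ), (u x : ℝ≥0∞) ^ r +
      tailBound r s D n := by
  classical
  set B : Finset (ZLat d) := Finset.Icc (fun _ => -(n : ℤ)) fun _ => (n : ℤ)
  set ε : ℝ≥0∞ := (D / (n + 1 : ℕ)) ^ ((r - s) / s)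
  have hpoint : ∀ x, (u x : ℝ≥0∞) ^ r ≤
      (if x ∈ B then (u x : ℝ≥0∞) ^ r else 0) + ε * (u x : ℝ≥0∞) ^ s := by
    intro x
    split_ifs with hx
    · exact le_self_add
    · rw [zero_add]
      exact hu.rpow_le_of_notMem_Icc hs hsr hD hx
  calc powSum r u
      ≤ ∑' x, ((if x ∈ B then (u x : ℝ≥0∞) ^ r else 0) + ε * (u x : ℝ≥0∞) ^ s) :=
        ENNReal.tsum_le_tsum hpoint
    _ = ∑ x ∈ B, (u x : ℝ≥0∞) ^ r + ε * powSum s u := by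
        rw [ENNReal.tsum_add, ENNReal.tsum_mul_left, powSum,
          tsum_eq_sum (s := B) fun x hx => if_neg hx, Finset.sum_ite_mem, Finset.inter_self]
    _ ≤ ∑ x ∈ B, (u x : ℝ≥0∞) ^ r + tailBound r s D n := by
        rw [tailBound]
        gcongr

/-- The condition `c ≤ powSum r u` is tested on the boxes `[-n, n]^d`, up to the uniformly small
tail. -/
theorem isClosed_setOf_isSchwarzSymmetric_le_powSum (hs : 0 < s) (hsr : s < r) (hD : D ≠ ⊤)
    (c : ℝ≥0∞) :
    IsClosed {u : ZLat d → ℝ≥0 | (IsSchwarzSymmetric u ∧ powSum s u ≤ D) ∧ c ≤ powSum r u} := by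
  let partialSum (n : ℕ) (u : ZLat d → ℝ≥0) : ℝ≥0∞ :=
    ∑ x ∈ Finset.Icc (fun _ => -(n : ℤ)) fun _ => (n : ℤ), (u x : ℝ≥0∞) ^ r
  have hpartial : ∀ n, Continuous (partialSum n) := fun n =>
    continuous_finsetSum _ fun x _ => ENNReal.continuous_rpow_const.comp
      (ENNReal.continuous_coe.comp (continuous_apply x))
  have hiff : ∀ u, IsSchwarzSymmetric u ∧ powSum s u ≤ D →
      (c ≤ powSum r u ↔ ∀ n, c ≤ partialSum n u + tailBound r s D n) := by
    refine fun u hu => ⟨fun hc n =>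
      hc.trans (hu.1.powSum_le_sum_add_tailBound hs hsr.le hu.2 n), fun hc => ?_⟩
    have hlim := (tendsto_tailBound hs hsr hD).const_add (powSum r u)
    rw [add_zero] at hlim
    exact ge_of_tendsto' hlim fun n =>
      (hc n).trans (add_le_add_left (ENNReal.sum_le_tsum _) _)
  simp only [and_congr_right_iff.2 (hiff _)]
  have hclosed : IsClosed {u | ∀ n, c ≤ partialSum n u + tailBound r s D n} := by
    rw [Set.ofPred_forall]
    exact isClosed_iInter fun n =>
      isClosed_le continuous_const ((hpartial n).add continuous_const)
  exact (isClosed_setOf_isSchwarzSymmetric.inter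
    ((lowerSemicontinuous_powSum s).isClosed_preimage D)).inter hclosed

theorem isCompact_setOf_isSchwarzSymmetric_powSum_eq (hs : 0 < s) (hsr : s < r) (hD : D ≠ ⊤)
    (c : ℝ≥0∞) :
    IsCompact {u : ZLat d → ℝ≥0 | IsSchwarzSymmetric u ∧ powSum s u ≤ D ∧ powSum r u = c} := by
  refine (isCompact_setOf_powSum_le hs hD).of_isClosed_subset ?_ fun u hu => hu.2.1
  convert (isClosed_setOf_isSchwarzSymmetric_le_powSum hs hsr hD c).inter
    ((lowerSemicontinuous_powSum r).isClosed_preimage c) using 1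
  ext u
  simp only [Set.mem_inter_iff, Set.mem_preimage, Set.mem_Iic, Set.mem_ofPred_eq, and_assoc,
    le_antisymm_iff (a := powSum r u), and_comm (a := powSum r u ≤ c)]

end Compactness

section Minimizer

variable {d : ℕ} {r : ℝ} {ω : ℝ≥0}

theorem exists_isSchwarzSymmetric_powSum_eq_one (d : ℕ) (hr : 0 < r) :
    ∃ u : ZLat d → ℝ≥0, IsSchwarzSymmetric u ∧ powSum 2 u ≠ ⊤ ∧ powSum r u = 1 := by
  have hsum : ∀ s : ℝ, 0 < s → powSum s (Pi.single 0 1 : ZLat d → ℝ≥0) = 1 := by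
    intro s hs
    rw [powSum, tsum_eq_single 0 fun x hx => by simp [hx, hs]]
    simp
  obtain ⟨u, hu, hrearr, -⟩ := exists_isSchwarzSymmetric_action_le 0
    ((Set.finite_singleton (0 : ZLat d)).subset (Pi.support_single_subset (a := (1 : ℝ≥0))))
  refine ⟨u, hu, ?_, ?_⟩
  · rw [hrearr.powSum_eq, hsum 2 two_pos]
    exact ENNReal.one_ne_top
  · rw [hrearr.powSum_eq, hsum r hr]

theorem exists_isSchwarzSymmetric_forall_action_le (d : ℕ) (hr : 2 < r) (hω : 0 < ω) :
    ∃ u : ZLat d → ℝ≥0, IsSchwarzSymmetric u ∧ powSum 2 u ≠ ⊤ ∧ powSum r u = 1 ∧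
      ∀ v, IsSchwarzSymmetric v → powSum r v = 1 →
        action (latticeGraph d) ω u ≤ action (latticeGraph d) ω v := by
  obtain ⟨u₀, hu₀, hu₀_top, hu₀_one⟩ := exists_isSchwarzSymmetric_powSum_eq_one d (two_pos.trans hr)
  have hω' : (ω : ℝ≥0∞) ≠ 0 := ENNReal.coe_ne_zero.2 hω.ne'
  set D : ℝ≥0∞ := action (latticeGraph d) ω u₀ / ω with hD
  have hD_top : D ≠ ⊤ := ENNReal.div_ne_top (action_latticeGraph_ne_top hu₀_top) hω'
  have hu₀_le : powSum 2 u₀ ≤ D := by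
    rw [hD, ENNReal.le_div_iff_mul_le (.inl hω') (.inl ENNReal.coe_ne_top), mul_comm]
    exact le_add_self
  obtain ⟨u, ⟨hu, hu_le, hu_one⟩, hmin⟩ := LowerSemicontinuousOn.exists_isMinOn
    (s := {u | IsSchwarzSymmetric u ∧ powSum 2 u ≤ D ∧ powSum r u = 1})
    (f := action (latticeGraph d) ω) ⟨u₀, hu₀, hu₀_le, hu₀_one⟩
    (isCompact_setOf_isSchwarzSymmetric_powSum_eq two_pos hr hD_top 1)
    (lowerSemicontinuous_action.lowerSemicontinuousOn _)
  refine ⟨u, hu, ne_top_of_le_ne_top hD_top hu_le, hu_one, fun v hv hv_one => ?_⟩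
  rcases le_total (powSum 2 v) D with hle | hge
  · exact hmin ⟨hv, hle, hv_one⟩
  · calc action (latticeGraph d) ω u ≤ action (latticeGraph d) ω u₀ := hmin ⟨hu₀, hu₀_le, hu₀_one⟩
      _ = ω * D := by rw [hD, ENNReal.mul_div_cancel hω' ENNReal.coe_ne_top]
      _ ≤ ω * powSum 2 v := by gcongr
      _ ≤ action (latticeGraph d) ω v := le_add_self

end Minimizer

theorem stmt19_general (d : ℕ) (hd : 0 < d) (σ : ℝ) (hσ : 0 < σ) (ω : NNReal) (hω : 0 < ω) :
    ∃ u : ZLat d → NNReal,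
      (∑' x : ZLat d, (u x : ENNReal) ^ (2 : ℝ)) < ⊤ ∧
      (∑' x : ZLat d, (u x : ENNReal) ^ (2 * σ + 2)) ^ (1 / (2 * σ + 2)) = 1 ∧
      RZd d u = u ∧
      gradEnergy d 2 u + (ω : ENNReal) * ∑' x : ZLat d, (u x : ENNReal) ^ (2 : ℝ) =
        ⨅ (w : ZLat d → NNReal)
          (_ : (∑' x : ZLat d, (w x : ENNReal) ^ (2 : ℝ)) < ⊤ ∧
            (∑' x : ZLat d, (w x : ENNReal) ^ (2 * σ + 2)) ^ (1 / (2 * σ + 2)) = 1),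
          gradEnergy d 2 w + (ω : ENNReal) * ∑' x : ZLat d, (w x : ENNReal) ^ (2 : ℝ) := by
  have hr : 0 < 2 * σ + 2 := by linarith
  obtain ⟨u, hu, hu_top, hu_one, hmin⟩ :=
    exists_isSchwarzSymmetric_forall_action_le d (r := 2 * σ + 2) (by linarith) hω
  have hfinite : ∀ v : ZLat d → ℝ≥0, v.support.Finite → powSum (2 * σ + 2) v = 1 →
      action (latticeGraph d) ω u ≤ action (latticeGraph d) ω v := by
    intro v hv hv_one
    obtain ⟨v', hv', hrearr, hle⟩ := exists_isSchwarzSymmetric_action_le ω hv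
    exact (hmin v' hv' ((hrearr.powSum_eq _).trans hv_one)).trans hle
  have hu_norm : powSum (2 * σ + 2) u ^ (1 / (2 * σ + 2)) = 1 := by rw [hu_one, ENNReal.one_rpow]
  simp only [gradEnergy_two_eq_edgeEnergy]
  refine ⟨u, hu_top.lt_top, hu_norm, hu.RZd_eq hd,
    le_antisymm (le_iInf₂ fun w hw => ?_) (iInf₂_le u ⟨hu_top.lt_top, hu_norm⟩)⟩
  have hw_one : powSum (2 * σ + 2) w = 1 := by
    rw [← ENNReal.rpow_one (powSum _ w), ← one_div_mul_cancel hr.ne', ENNReal.rpow_mul, powSum,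
      hw.2, ENNReal.one_rpow]
  exact le_action_of_forall_finite_support hr hfinite hw_one

/-- The constrained minimization problem
I_ω = inf{‖∇u‖₂² + ω‖u‖₂² : ‖u‖_{2σ+2} = 1} admits a Schwarz symmetric minimizer. -/
theorem stmt19 (d : ℕ) (hd : 2 ≤ d) (σ : ℝ) (hσ : 0 < σ) (ω : NNReal) (hω : 0 < ω) :
    ∃ u : ZLat d → NNReal,
      (∑' x : ZLat d, (u x : ENNReal) ^ (2 : ℝ)) < ⊤ ∧
      (∑' x : ZLat d, (u x : ENNReal) ^ (2 * σ + 2)) ^ (1 / (2 * σ + 2)) = 1 ∧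
      RZd d u = u ∧
      gradEnergy d 2 u + (ω : ENNReal) * ∑' x : ZLat d, (u x : ENNReal) ^ (2 : ℝ) =
        ⨅ (w : ZLat d → NNReal)
          (_ : (∑' x : ZLat d, (w x : ENNReal) ^ (2 : ℝ)) < ⊤ ∧
            (∑' x : ZLat d, (w x : ENNReal) ^ (2 * σ + 2)) ^ (1 / (2 * σ + 2)) = 1),
          gradEnergy d 2 w + (ω : ENNReal) * ∑' x : ZLat d, (w x : ENNReal) ^ (2 : ℝ) :=
  stmt19_general d (by lia) σ hσ ω hω

end
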